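/- Transformation of the total free energy (Corollary, integral form): Let ω ⊆ ℝ² be a bounded open set, let ψ_A, ψ_B : ℝ² → ℝ³ be twice continuously differentiable on an open neighborhood of the closure of ω with ∂₁ψ_A × ∂₂ψ_A ≠ 0 on the closure of ω, suppose (∇ψ_B(y))ᵀ∇ψ_B(y) = (∇ψ_A(y))ᵀ∇ψ_A(y) for all y ∈ ω, and let f : ω → ℝ³ be integrable and α > 0. Then, writing g_A = g[ψ_A], II_A = II[ψ_A], II_B = II[ψ_B] pointwise on ω, (α/2)∫_ω √(det g_A) |g_A^{-1/2}(II_B − II_A) g_A^{-1/2}|² dx − ∫_ω √(det g_A) f·ψ_B dx = (α/2)∫_ω √(det g_A) ( Σ_{m=1}^{3}|g_A^{-1/2} D²ψ_Bᵐ g_A^{-1/2}|² − 2 II_B : (g_A⁻¹ II_A g_A⁻¹) ) dx − ∫_ω √(det g_A) f·ψ_B dx + (α/2)∫_ω √(det g_A) C_A dx, where C_A(x) = 2 |g_A^{-1/2} II_A g_A^{-1/2}|²(x) − Σ_{m=1}^{3} |g_A^{-1/2} D²ψ_Aᵐ(x) g_A^{-1/2}|² depends only on ψ_A. -/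

import Mathlib

open Matrix MeasureTheory

noncomputable section

/-- `i`-th partial derivative of `ψ : ℝ² → ℝ³` at `x`. -/
def pd (ψ : (Fin 2 → ℝ) → (Fin 3 → ℝ)) (i : Fin 2) (x : Fin 2 → ℝ) : Fin 3 → ℝ :=
  fderiv ℝ ψ x (Pi.single i 1)

/-- Jacobian matrix `∇ψ(x) ∈ ℝ^{3×2}`. -/
def jac (ψ : (Fin 2 → ℝ) → (Fin 3 → ℝ)) (x : Fin 2 → ℝ) : Matrix (Fin 3) (Fin 2) ℝ :=
  Matrix.of fun m i => pd ψ i x m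

/-- First fundamental form `g[ψ](x) = (∇ψ(x))ᵀ ∇ψ(x)`. -/
def met (ψ : (Fin 2 → ℝ) → (Fin 3 → ℝ)) (x : Fin 2 → ℝ) : Matrix (Fin 2) (Fin 2) ℝ :=
  (jac ψ x)ᵀ * jac ψ x

/-- Euclidean inner product on `ℝ³`. -/
def dot3 (u v : Fin 3 → ℝ) : ℝ := ∑ m, u m * v m

/-- Euclidean norm on `ℝ³`. -/
def norm3 (u : Fin 3 → ℝ) : ℝ := Real.sqrt (dot3 u u)

/-- Cross product `∂₁ψ(x) × ∂₂ψ(x)`. -/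
def crossPsi (ψ : (Fin 2 → ℝ) → (Fin 3 → ℝ)) (x : Fin 2 → ℝ) : Fin 3 → ℝ :=
  crossProduct (pd ψ 0 x) (pd ψ 1 x)

/-- Unit normal `n[ψ](x)`. -/
def nrm (ψ : (Fin 2 → ℝ) → (Fin 3 → ℝ)) (x : Fin 2 → ℝ) : Fin 3 → ℝ :=
  (norm3 (crossPsi ψ x))⁻¹ • crossPsi ψ x

/-- Second partial derivative `∂ᵢ∂ⱼψ(x)`. -/
def pd2 (ψ : (Fin 2 → ℝ) → (Fin 3 → ℝ)) (i j : Fin 2) (x : Fin 2 → ℝ) : Fin 3 → ℝ :=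
  pd (pd ψ j) i x

/-- Hessian `D²ψᵐ(x)` of the `m`-th component. -/
def hess (ψ : (Fin 2 → ℝ) → (Fin 3 → ℝ)) (m : Fin 3) (x : Fin 2 → ℝ) :
    Matrix (Fin 2) (Fin 2) ℝ :=
  Matrix.of fun i j => pd2 ψ i j x m

/-- Second fundamental form `II[ψ](x)ᵢⱼ = ∂ᵢ∂ⱼψ(x)·n[ψ](x)`. -/
def sff (ψ : (Fin 2 → ℝ) → (Fin 3 → ℝ)) (x : Fin 2 → ℝ) : Matrix (Fin 2) (Fin 2) ℝ :=
  Matrix.of fun i j => dot3 (pd2 ψ i j x) (nrm ψ x)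

/-- Frobenius inner product `A : B`. -/
def frob {n : Type*} [Fintype n] (A B : Matrix n n ℝ) : ℝ := ∑ i, ∑ j, A i j * B i j

/-- Gram–Schmidt frame vector `y¹[ψ](x)`. -/
def y1 (ψ : (Fin 2 → ℝ) → (Fin 3 → ℝ)) (x : Fin 2 → ℝ) : Fin 3 → ℝ :=
  (norm3 (pd ψ 0 x))⁻¹ • pd ψ 0 x

/-- Gram–Schmidt vector `ŷ²[ψ](x)` (before normalization). -/
def yhat2 (ψ : (Fin 2 → ℝ) → (Fin 3 → ℝ)) (x : Fin 2 → ℝ) : Fin 3 → ℝ :=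
  pd ψ 1 x - (dot3 (pd ψ 1 x) (y1 ψ x)) • y1 ψ x

/-- Gram–Schmidt frame vector `y²[ψ](x)`. -/
def y2 (ψ : (Fin 2 → ℝ) → (Fin 3 → ℝ)) (x : Fin 2 → ℝ) : Fin 3 → ℝ :=
  (norm3 (yhat2 ψ x))⁻¹ • yhat2 ψ x

def QQ (W M N : Matrix (Fin 2) (Fin 2) ℝ) : ℝ :=
  ∑ i, ∑ j, ∑ k, ∑ l, W i k * W j l * (M i j * N k l)

theorem frob_T (T M N : Matrix (Fin 2) (Fin 2) ℝ) (hT : Tᵀ = T) :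
    frob (T * M * T) (T * N * T) = QQ (T * T) M N := by
  have h : T 1 0 = T 0 1 := by
    have := congrFun (congrFun hT 0) 1
    simpa using this
  simp only [frob, QQ, Matrix.mul_apply, Fin.sum_univ_two, h]
  ring

theorem frob_W (W M N : Matrix (Fin 2) (Fin 2) ℝ) (hT : Wᵀ = W) :
    frob M (W * N * W) = QQ W M N := by
  have h : W 1 0 = W 0 1 := by
    have := congrFun (congrFun hT 0) 1
    simpa using this
  simp only [frob, QQ, Matrix.mul_apply, Fin.sum_univ_two, h]
  ring

theorem QQ_sub (W M N : Matrix (Fin 2) (Fin 2) ℝ) (hT : Wᵀ = W) :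
    QQ W (M - N) (M - N) = QQ W M M - 2 * QQ W M N + QQ W N N := by
  have h : W 1 0 = W 0 1 := by
    have := congrFun (congrFun hT 0) 1
    simpa using this
  simp only [QQ, Matrix.sub_apply, Fin.sum_univ_two, h]
  ring

theorem QQ_hess (W : Matrix (Fin 2) (Fin 2) ℝ) (ψ : (Fin 2 → ℝ) → (Fin 3 → ℝ)) (x : Fin 2 → ℝ) :
    (∑ m, QQ W (hess ψ m x) (hess ψ m x)) =
      ∑ i, ∑ j, ∑ k, ∑ l, W i k * W j l * dot3 (pd2 ψ i j x) (pd2 ψ k l x) := by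
  simp only [QQ, hess, dot3, Matrix.of_apply, Fin.sum_univ_two, Fin.sum_univ_three]
  ring

theorem QQ_key (W : Matrix (Fin 2) (Fin 2) ℝ) (ψA ψB : (Fin 2 → ℝ) → (Fin 3 → ℝ)) (x : Fin 2 → ℝ)
    (h : ∀ i j k l, dot3 (pd2 ψB i j x) (pd2 ψB k l x) - sff ψB x i j * sff ψB x k l
      = dot3 (pd2 ψA i j x) (pd2 ψA k l x) - sff ψA x i j * sff ψA x k l) :
    (∑ m, QQ W (hess ψB m x) (hess ψB m x)) - QQ W (sff ψB x) (sff ψB x)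
     = (∑ m, QQ W (hess ψA m x) (hess ψA m x)) - QQ W (sff ψA x) (sff ψA x) := by
  rw [QQ_hess, QQ_hess]
  simp only [QQ, ← Finset.sum_sub_distrib, ← mul_sub, h]

theorem met_apply (ψ : (Fin 2 → ℝ) → (Fin 3 → ℝ)) (x : Fin 2 → ℝ) (i j : Fin 2) :
    met ψ x i j = dot3 (pd ψ i x) (pd ψ j x) := by
  simp [met, jac, dot3, Matrix.mul_apply]

theorem met_symm (ψ : (Fin 2 → ℝ) → (Fin 3 → ℝ)) (x : Fin 2 → ℝ) : (met ψ x)ᵀ = met ψ x := by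
  simp [met, Matrix.transpose_mul]

theorem det_met (ψ : (Fin 2 → ℝ) → (Fin 3 → ℝ)) (x : Fin 2 → ℝ) :
    (met ψ x).det = dot3 (crossPsi ψ x) (crossPsi ψ x) := by
  rw [Matrix.det_fin_two]
  simp only [met_apply, crossPsi, cross_apply, dot3, Fin.sum_univ_three]
  simp
  ring

theorem dot3_self_pos (u : Fin 3 → ℝ) (h : u ≠ 0) : 0 < dot3 u u := by
  obtain ⟨m, hm⟩ := Function.ne_iff.mp h
  exact Finset.sum_pos' (fun i _ => mul_self_nonneg _) ⟨m, Finset.mem_univ _, mul_self_pos.mpr hm⟩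

theorem cross_id (u v p q : Fin 3 → ℝ) :
    dot3 (crossProduct u v) (crossProduct u v) * dot3 p q =
      dot3 p (crossProduct u v) * dot3 q (crossProduct u v) +
      (dot3 p u * dot3 q u * dot3 v v - dot3 p u * dot3 q v * dot3 u v
        - dot3 p v * dot3 q u * dot3 u v + dot3 p v * dot3 q v * dot3 u u) := by
  simp only [cross_apply, dot3, Fin.sum_univ_three]
  simp
  ring

theorem sff_mul (ψ : (Fin 2 → ℝ) → (Fin 3 → ℝ)) (x : Fin 2 → ℝ) (h : crossPsi ψ x ≠ 0)
    (i j k l : Fin 2) :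
    dot3 (crossPsi ψ x) (crossPsi ψ x) * (sff ψ x i j * sff ψ x k l) =
      dot3 (pd2 ψ i j x) (crossPsi ψ x) * dot3 (pd2 ψ k l x) (crossPsi ψ x) := by
  have hp := dot3_self_pos _ h
  have e : ∀ p : Fin 3 → ℝ, dot3 p (nrm ψ x) = (norm3 (crossPsi ψ x))⁻¹ * dot3 p (crossPsi ψ x) := by
    intro p
    simp only [nrm, dot3, Fin.sum_univ_three, Pi.smul_apply, smul_eq_mul]
    ring
  have hn : norm3 (crossPsi ψ x) ≠ 0 := (Real.sqrt_pos.mpr hp).ne'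
  have hs : dot3 (crossPsi ψ x) (crossPsi ψ x) = norm3 (crossPsi ψ x) ^ 2 :=
    (Real.sq_sqrt hp.le).symm
  simp only [sff, Matrix.of_apply, e]
  rw [hs]
  field_simp

theorem key_pt (ψA ψB : (Fin 2 → ℝ) → (Fin 3 → ℝ)) (x : Fin 2 → ℝ)
    (hA : crossPsi ψA x ≠ 0) (hB : crossPsi ψB x ≠ 0) (hm : met ψB x = met ψA x)
    (hG : ∀ i j k, dot3 (pd2 ψB i j x) (pd ψB k x) = dot3 (pd2 ψA i j x) (pd ψA k x))
    (i j k l : Fin 2) :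
    dot3 (pd2 ψB i j x) (pd2 ψB k l x) - sff ψB x i j * sff ψB x k l
      = dot3 (pd2 ψA i j x) (pd2 ψA k l x) - sff ψA x i j * sff ψA x k l := by
  have hd : dot3 (crossPsi ψB x) (crossPsi ψB x) = dot3 (crossPsi ψA x) (crossPsi ψA x) := by
    rw [← det_met, ← det_met, hm]
  have hmm : ∀ a b, dot3 (pd ψB a x) (pd ψB b x) = dot3 (pd ψA a x) (pd ψA b x) := by
    intro a b; rw [← met_apply, ← met_apply, hm]
  have a1 := sff_mul ψA x hA i j k l
  have b1 := sff_mul ψB x hB i j k l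
  have a2 := cross_id (pd ψA 0 x) (pd ψA 1 x) (pd2 ψA i j x) (pd2 ψA k l x)
  have b2 := cross_id (pd ψB 0 x) (pd ψB 1 x) (pd2 ψB i j x) (pd2 ψB k l x)
  simp only [hG, hmm] at b2
  change dot3 (crossPsi ψA x) (crossPsi ψA x) * _ = dot3 _ (crossPsi ψA x) * dot3 _ (crossPsi ψA x) + _ at a2
  change dot3 (crossPsi ψB x) (crossPsi ψB x) * _ = dot3 _ (crossPsi ψB x) * dot3 _ (crossPsi ψB x) + _ at b2
  rw [hd] at b1 b2
  apply mul_left_cancel₀ (dot3_self_pos _ hA).ne'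
  linear_combination b2 - b1 - a2 + a1

theorem pd_contDiff {ψ : (Fin 2 → ℝ) → (Fin 3 → ℝ)} {U : Set (Fin 2 → ℝ)} (hU : IsOpen U)
    (h : ContDiffOn ℝ 2 ψ U) (i : Fin 2) : ContDiffOn ℝ 1 (pd ψ i) U := by
  have h1 : ContDiffOn ℝ 1 (fderiv ℝ ψ) U := h.fderiv_of_isOpen hU (by norm_num)
  exact h1.clm_apply contDiffOn_const

theorem pd2_cont {ψ : (Fin 2 → ℝ) → (Fin 3 → ℝ)} {U : Set (Fin 2 → ℝ)} (hU : IsOpen U)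
    (h : ContDiffOn ℝ 2 ψ U) (i j : Fin 2) : ContinuousOn (pd2 ψ i j) U := by
  have h1 : ContinuousOn (fderiv ℝ (pd ψ j)) U :=
    (pd_contDiff hU h j).continuousOn_fderiv_of_isOpen hU le_rfl
  exact h1.clm_apply continuousOn_const

theorem pd2_symm {ψ : (Fin 2 → ℝ) → (Fin 3 → ℝ)} {U : Set (Fin 2 → ℝ)} (hU : IsOpen U)
    (h : ContDiffOn ℝ 2 ψ U) (i j : Fin 2) {x : Fin 2 → ℝ} (hx : x ∈ U) :
    pd2 ψ i j x = pd2 ψ j i x := by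
  have h1 : ContDiffOn ℝ 1 (fderiv ℝ ψ) U := h.fderiv_of_isOpen hU (by norm_num)
  have hd : DifferentiableAt ℝ (fderiv ℝ ψ) x :=
    (h1.contDiffAt (hU.mem_nhds hx)).differentiableAt (by norm_num)
  have e : ∀ i j, pd2 ψ i j x = fderiv ℝ (fderiv ℝ ψ) x (Pi.single i 1) (Pi.single j 1) := by
    intro i j
    unfold pd2
    conv_lhs => unfold pd
    have : fderiv ℝ (fun y => fderiv ℝ ψ y (Pi.single j 1)) x = _ :=
      fderiv_clm_apply hd (differentiableAt_const _)
    rw [this]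
    simp
  rw [e, e]
  have := (h.contDiffAt (hU.mem_nhds hx)).isSymmSndFDerivAt (by simp)
  exact this _ _

theorem met_deriv {ψ : (Fin 2 → ℝ) → (Fin 3 → ℝ)} {U : Set (Fin 2 → ℝ)} (hU : IsOpen U)
    (h : ContDiffOn ℝ 2 ψ U) (i j k : Fin 2) {x : Fin 2 → ℝ} (hx : x ∈ U) :
    fderiv ℝ (fun y => met ψ y i j) x (Pi.single k 1) =
      dot3 (pd2 ψ k i x) (pd ψ j x) + dot3 (pd2 ψ k j x) (pd ψ i x) := by
  have hd : ∀ i, HasFDerivAt (pd ψ i) (fderiv ℝ (pd ψ i) x) x := fun i =>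
    (((pd_contDiff hU h i).contDiffAt (hU.mem_nhds hx)).differentiableAt (by norm_num)).hasFDerivAt
  have hc : ∀ i m, HasFDerivAt (fun y => pd ψ i y m)
      ((ContinuousLinearMap.proj m).comp (fderiv ℝ (pd ψ i) x)) x := fun i m =>
    (hasFDerivAt_pi'.mp (hd i)) m
  have hs := HasFDerivAt.fun_sum (u := Finset.univ) (fun m _ => (hc i m).fun_mul (hc j m))
  have hq : (fun y => met ψ y i j) = fun y => ∑ m, pd ψ i y m * pd ψ j y m := by
    funext y
    rw [met_apply, dot3]
  rw [hq]
  rw [hs.fderiv]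
  simp only [dot3, pd2, Fin.sum_univ_three]
  simp [pd]
  ring

theorem christoffel {ψA ψB : (Fin 2 → ℝ) → (Fin 3 → ℝ)} {U ω : Set (Fin 2 → ℝ)} (hU : IsOpen U)
    (hω : IsOpen ω) (hsub : ω ⊆ U)
    (hA : ContDiffOn ℝ 2 ψA U) (hB : ContDiffOn ℝ 2 ψB U)
    (hmet : ∀ y ∈ ω, met ψB y = met ψA y) {x : Fin 2 → ℝ} (hx : x ∈ ω) (i j k : Fin 2) :
    dot3 (pd2 ψB i j x) (pd ψB k x) = dot3 (pd2 ψA i j x) (pd ψA k x) := by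
  have e : ∀ i j k, dot3 (pd2 ψB k i x) (pd ψB j x) + dot3 (pd2 ψB k j x) (pd ψB i x) =
      dot3 (pd2 ψA k i x) (pd ψA j x) + dot3 (pd2 ψA k j x) (pd ψA i x) := by
    intro i j k
    rw [← met_deriv hU hB i j k (hsub hx), ← met_deriv hU hA i j k (hsub hx)]
    have : (fun y => met ψB y i j) =ᶠ[nhds x] (fun y => met ψA y i j) := by
      filter_upwards [hω.mem_nhds hx] with y hy
      rw [hmet y hy]
    rw [this.fderiv_eq]
  have e1 := e j k i
  have e2 := e i k j
  have e3 := e i j k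
  rw [pd2_symm hU hB j i (hsub hx), pd2_symm hU hA j i (hsub hx)] at e2
  rw [pd2_symm hU hB k i (hsub hx), pd2_symm hU hA k i (hsub hx),
    pd2_symm hU hB k j (hsub hx), pd2_symm hU hA k j (hsub hx)] at e3
  linarith

theorem dot3_cont {u v : (Fin 2 → ℝ) → (Fin 3 → ℝ)} {U : Set (Fin 2 → ℝ)}
    (hu : ContinuousOn u U) (hv : ContinuousOn v U) : ContinuousOn (fun y => dot3 (u y) (v y)) U := by
  unfold dot3
  fun_prop

theorem met_cont {ψ : (Fin 2 → ℝ) → (Fin 3 → ℝ)} {U : Set (Fin 2 → ℝ)} (hU : IsOpen U)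
    (h : ContDiffOn ℝ 2 ψ U) : ContinuousOn (met ψ) U := by
  refine continuousOn_pi.mpr fun i => continuousOn_pi.mpr fun j => ?_
  simp only [met_apply]
  exact dot3_cont (pd_contDiff hU h i).continuousOn (pd_contDiff hU h j).continuousOn

theorem cross_cont {ψ : (Fin 2 → ℝ) → (Fin 3 → ℝ)} {U : Set (Fin 2 → ℝ)} (hU : IsOpen U)
    (h : ContDiffOn ℝ 2 ψ U) : ContinuousOn (crossPsi ψ) U := by
  have h0 := (pd_contDiff hU h 0).continuousOn
  have h1 := (pd_contDiff hU h 1).continuousOn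
  refine continuousOn_pi.mpr fun m => ?_
  simp only [crossPsi, cross_apply]
  fin_cases m <;> simp <;> fun_prop

theorem sff_cont {ψ : (Fin 2 → ℝ) → (Fin 3 → ℝ)} {U K : Set (Fin 2 → ℝ)} (hU : IsOpen U)
    (h : ContDiffOn ℝ 2 ψ U) (hK : K ⊆ U) (hc : ∀ y ∈ K, crossPsi ψ y ≠ 0) (i j : Fin 2) :
    ContinuousOn (fun y => sff ψ y i j) K := by
  have hcc := (cross_cont hU h).mono hK
  simp only [sff, Matrix.of_apply]
  refine dot3_cont ((pd2_cont hU h i j).mono hK) ?_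
  unfold nrm
  have h1 : ContinuousOn (fun y => norm3 (crossPsi ψ y)) K := (dot3_cont hcc hcc).sqrt
  have h2 : ∀ y ∈ K, norm3 (crossPsi ψ y) ≠ 0 := fun y hy =>
    (Real.sqrt_pos.mpr (dot3_self_pos _ (hc y hy))).ne'
  exact (h1.inv₀ h2).smul hcc

theorem QQ_cont {W M N : (Fin 2 → ℝ) → Matrix (Fin 2) (Fin 2) ℝ} {K : Set (Fin 2 → ℝ)}
    (hW : ∀ i j, ContinuousOn (fun y => W y i j) K) (hM : ∀ i j, ContinuousOn (fun y => M y i j) K)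
    (hN : ∀ i j, ContinuousOn (fun y => N y i j) K) :
    ContinuousOn (fun y => QQ (W y) (M y) (N y)) K := by
  unfold QQ
  refine continuousOn_finsetSum _ fun i _ => continuousOn_finsetSum _ fun j _ =>
    continuousOn_finsetSum _ fun k _ => continuousOn_finsetSum _ fun l _ => ?_
  exact ((hW i k).mul (hW j l)).mul ((hM i j).mul (hN k l))

theorem inv_cont {g : (Fin 2 → ℝ) → Matrix (Fin 2) (Fin 2) ℝ} {K : Set (Fin 2 → ℝ)}
    (hg : ContinuousOn g K) (hd : ∀ y ∈ K, (g y).det ≠ 0) (i j : Fin 2) :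
    ContinuousOn (fun y => (g y)⁻¹ i j) K := by
  have hc : ∀ i j, ContinuousOn (fun y => g y i j) K := fun i j =>
    continuousOn_pi.mp (continuousOn_pi.mp hg i) j
  have hdet : ContinuousOn (fun y => (g y).det) K := by
    simp only [Matrix.det_fin_two]
    exact ((hc 0 0).mul (hc 1 1)).sub ((hc 0 1).mul (hc 1 0))
  have ha : ContinuousOn (fun y => (g y).adjugate i j) K := by
    simp only [Matrix.adjugate_fin_two]
    fin_cases i <;> fin_cases j
    · exact hc 1 1
    · exact (hc 0 1).neg
    · exact (hc 1 0).neg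
    · exact hc 0 0
  simp only [Matrix.inv_def, Ring.inverse_eq_inv', Matrix.smul_apply, smul_eq_mul]
  exact (hdet.inv₀ hd).mul ha

/-- transformation of the total free energy, integral form.
Here `S y` is the unique positive definite square root of `g_A(y) = g[ψ_A](y)`
at each `y ∈ ω`, so `(S y)⁻¹ = g_A^{-1/2}(y)`. -/
theorem transformed_total_free_energy
    (ω U : Set (Fin 2 → ℝ)) (hωo : IsOpen ω) (hωb : Bornology.IsBounded ω)
    (hU : IsOpen U) (hcl : closure ω ⊆ U)
    (ψA ψB : (Fin 2 → ℝ) → (Fin 3 → ℝ))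
    (hA : ContDiffOn ℝ 2 ψA U) (hB : ContDiffOn ℝ 2 ψB U)
    (hcA : ∀ y ∈ closure ω, crossPsi ψA y ≠ 0)
    (hmet : ∀ y ∈ ω, met ψB y = met ψA y)
    (f : (Fin 2 → ℝ) → (Fin 3 → ℝ)) (hf : IntegrableOn f ω)
    (α : ℝ) (hα : 0 < α)
    (S : (Fin 2 → ℝ) → Matrix (Fin 2) (Fin 2) ℝ)
    (hS : ∀ y ∈ ω, (S y).PosDef ∧ S y * S y = met ψA y) :
    (α / 2) * (∫ y in ω, Real.sqrt (met ψA y).det *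
        frob ((S y)⁻¹ * (sff ψB y - sff ψA y) * (S y)⁻¹)
             ((S y)⁻¹ * (sff ψB y - sff ψA y) * (S y)⁻¹))
      - ∫ y in ω, Real.sqrt (met ψA y).det * dot3 (f y) (ψB y)
    = (α / 2) * (∫ y in ω, Real.sqrt (met ψA y).det *
          ((∑ m, frob ((S y)⁻¹ * hess ψB m y * (S y)⁻¹)
                      ((S y)⁻¹ * hess ψB m y * (S y)⁻¹))
            - 2 * frob (sff ψB y) ((met ψA y)⁻¹ * sff ψA y * (met ψA y)⁻¹)))
      - (∫ y in ω, Real.sqrt (met ψA y).det * dot3 (f y) (ψB y))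
      + (α / 2) * (∫ y in ω, Real.sqrt (met ψA y).det *
          (2 * frob ((S y)⁻¹ * sff ψA y * (S y)⁻¹)
                    ((S y)⁻¹ * sff ψA y * (S y)⁻¹)
            - ∑ m, frob ((S y)⁻¹ * hess ψA m y * (S y)⁻¹)
                        ((S y)⁻¹ * hess ψA m y * (S y)⁻¹))) := by
  have hsub : ω ⊆ U := subset_closure.trans hcl
  have hmetc : ∀ y ∈ closure ω, met ψB y = met ψA y := by
    have : Set.EqOn (met ψB) (met ψA) (closure ω) :=
      Set.EqOn.of_subset_closure (fun y hy => hmet y hy) ((met_cont hU hB).mono hcl)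
        ((met_cont hU hA).mono hcl) subset_closure subset_rfl
    exact this
  have hdet : ∀ y ∈ closure ω, (met ψA y).det ≠ 0 := fun y hy => by
    rw [det_met]; exact (dot3_self_pos _ (hcA y hy)).ne'
  have hcB : ∀ y ∈ closure ω, crossPsi ψB y ≠ 0 := fun y hy h0 => by
    apply hdet y hy
    rw [← hmetc y hy, det_met, h0]
    simp [dot3]
  have hWs : ∀ y, ((met ψA y)⁻¹)ᵀ = (met ψA y)⁻¹ := fun y => by
    rw [Matrix.transpose_nonsing_inv, met_symm]
  have hfr : ∀ y ∈ ω, ∀ M N, frob ((S y)⁻¹ * M * (S y)⁻¹) ((S y)⁻¹ * N * (S y)⁻¹) =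
      QQ ((met ψA y)⁻¹) M N := by
    intro y hy M N
    obtain ⟨h1, h2⟩ := hS y hy
    have hs : (S y)ᵀ = S y := by
      have := h1.isHermitian.eq
      rwa [Matrix.conjTranspose_eq_transpose_of_trivial] at this
    rw [frob_T _ _ _ (by rw [Matrix.transpose_nonsing_inv, hs]), ← h2, Matrix.mul_inv_rev]
  have hWc := inv_cont ((met_cont hU hA).mono hcl) hdet
  have hsA := sff_cont hU hA hcl hcA
  have hsB := sff_cont hU hB hcl hcB
  have hh : ∀ ψ, ContDiffOn ℝ 2 ψ U → ∀ m i j,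
      ContinuousOn (fun y => hess ψ m y i j) (closure ω) := by
    intro ψ hψ m i j
    exact continuousOn_pi.mp ((pd2_cont hU hψ i j).mono hcl) m
  have hsq : ContinuousOn (fun y => Real.sqrt (met ψA y).det) (closure ω) := by
    simp only [det_met]
    exact (dot3_cont ((cross_cont hU hA).mono hcl) ((cross_cont hU hA).mono hcl)).sqrt
  have hK : IsCompact (closure ω) := hωb.isCompact_closure
  have hms := hωo.measurableSet
  set R1 : (Fin 2 → ℝ) → ℝ := fun y => Real.sqrt (met ψA y).det *
    ((∑ m, QQ ((met ψA y)⁻¹) (hess ψB m y) (hess ψB m y))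
      - 2 * QQ ((met ψA y)⁻¹) (sff ψB y) (sff ψA y)) with hR1
  set R2 : (Fin 2 → ℝ) → ℝ := fun y => Real.sqrt (met ψA y).det *
    (2 * QQ ((met ψA y)⁻¹) (sff ψA y) (sff ψA y)
      - ∑ m, QQ ((met ψA y)⁻¹) (hess ψA m y) (hess ψA m y)) with hR2
  have i1 : IntegrableOn R1 ω := by
    refine IntegrableOn.mono_set (ContinuousOn.integrableOn_compact hK ?_) subset_closure
    exact hsq.mul ((continuousOn_finsetSum _ fun m _ => QQ_cont hWc (hh ψB hB m) (hh ψB hB m)).sub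
      (continuousOn_const.mul (QQ_cont hWc hsB hsA)))
  have i2 : IntegrableOn R2 ω := by
    refine IntegrableOn.mono_set (ContinuousOn.integrableOn_compact hK ?_) subset_closure
    exact hsq.mul ((continuousOn_const.mul (QQ_cont hWc hsA hsA)).sub
      (continuousOn_finsetSum _ fun m _ => QQ_cont hWc (hh ψA hA m) (hh ψA hA m)))
  have hfin : ∀ L P Q F : ℝ, L = P + Q → α / 2 * L - F = α / 2 * P - F + α / 2 * Q := by
    intro L P Q F h
    rw [h]; ring
  apply hfin
  refine (setIntegral_congr_fun (g := fun y => R1 y + R2 y) hms ?_).trans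
    ((integral_add i1 i2).trans (congrArg₂ (· + ·) (setIntegral_congr_fun hms ?_)
      (setIntegral_congr_fun hms ?_)))
  rotate_left
  · intro y hy
    simp only [hR1, hfr y hy, frob_W _ _ _ (hWs y)]
  · intro y hy
    simp only [hR2, hfr y hy]
  · intro y hy
    simp only [hR1, hR2, hfr y hy, QQ_sub _ _ _ (hWs y)]
    have hc := subset_closure hy
    have := QQ_key ((met ψA y)⁻¹) ψA ψB y (key_pt ψA ψB y (hcA y hc) (hcB y hc) (hmet y hy)
      (christoffel hU hωo hsub hA hB hmet hy))
    linear_combination (-Real.sqrt (met ψA y).det) * this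


end
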